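/- Fix positive integers r and s and set N := rs. Let 𝕂 := ℚ(u), t := u², k := u^{r+1}, and let Λ := 𝕂[p₁, p₂, p₃, …] be the polynomial ring in countably many variables, graded by deg pₙ = n. For a partition λ set p_λ := Π p_{λᵢ}, z_λ := Π_{i≥1} i^{m_i(λ)} m_i(λ)!, and z^{±}_λ(t) := Π_{i≥1} m_i(λ)! · (± i·(1 + t^{−i})/(1 − t^{−i}))^{m_i(λ)}, where m_i(λ) is the multiplicity of i in λ. Define for n ≥ 1: T_{−n} := k·t^{(n−1)/2}·Σ_{λ⊢n} p_λ/z^{+}_λ(t) + k^{−1}·t^{−(n−1)/2}·Σ_{λ⊢n} p_λ/z^{−}_λ(t) (note t^{±(n−1)/2} = u^{±(n−1)} ∈ 𝕂), and for a partition μ = (μ₁, …, μ_ℓ) set T_{−μ} := T_{−μ₁} ⋯ T_{−μ_ℓ}. Define e_n := Σ_{λ⊢n} (−1)^{n−ℓ(λ)} p_λ / z_λ (the n-th elementary symmetric function expressed in power sums). Then: (1) the family {T_{−μ} : μ ⊢ N} is a 𝕂-basis of the homogeneous component of Λ of degree N; and (2) writing e_r^{ s} = Σ_{μ⊢N} c_μ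 · T_{−μ} with c_μ ∈ 𝕂, the coefficient of T_{−(1^N)} is c_{(1^N)} = Π_{i=1}^{r} ( t^i / (1 − t^i)² )^{s}. -/

import Mathlib

noncomputable section

/-- `𝕂 := ℚ(u)`, the field of rational functions in one variable `u` over `ℚ`. -/
abbrev QtField := RatFunc ℚ

/-- The variable `u`, with `t = u²`. -/
def uVar : QtField := RatFunc.X

/-- `t := u²`. -/
def tVar : QtField := uVar ^ 2

/-- `Λ := 𝕂[p₁, p₂, p₃, …]`: the variable of index `i : ℕ` represents `p_{i+1}`, so that
`pₙ` is the variable of index `n − 1` and the grading `deg pₙ = n` corresponds to the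
weight function `i ↦ i + 1`. -/
abbrev SymFuncAlg := MvPolynomial ℕ QtField

/-- The power sum `pₙ` (for `n ≥ 1`), i.e. the variable of index `n − 1`. -/
def pVar (n : ℕ) : SymFuncAlg := MvPolynomial.X (n - 1)

/-- `p_λ := Π_i p_{λᵢ}`. -/
def pPart {n : ℕ} (lam : Nat.Partition n) : SymFuncAlg :=
  (lam.parts.map pVar).prod

/-- `z_λ := Π_{i≥1} i^{m_i(λ)} m_i(λ)!` where `m_i(λ)` is the multiplicity of `i` in `λ`. -/
def zPart {n : ℕ} (lam : Nat.Partition n) : ℕ :=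
  lam.parts.prod * ∏ i ∈ lam.parts.toFinset, (lam.parts.count i).factorial

/-- `z^{±}_λ(t) := Π_{i≥1} m_i(λ)! · (± i·(1 + t^{−i})/(1 − t^{−i}))^{m_i(λ)}`;
the sign `± 1` is the parameter `e`. -/
def zSignPart (e : QtField) {n : ℕ} (lam : Nat.Partition n) : QtField :=
  ∏ i ∈ lam.parts.toFinset,
    ((lam.parts.count i).factorial : QtField) *
      (e * (i : QtField) * (1 + tVar ^ (-(i : ℤ))) / (1 - tVar ^ (-(i : ℤ))))
        ^ (lam.parts.count i)

/-- `T_{−n} := k·t^{(n−1)/2}·Σ_{λ⊢n} p_λ/z⁺_λ(t) + k⁻¹·t^{−(n−1)/2}·Σ_{λ⊢n} p_λ/z⁻_λ(t)`,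
with `k := u^{r+1}` and `t^{±(n−1)/2} = u^{±(n−1)}`. -/
def Tneg (r : ℕ) (n : ℕ) : SymFuncAlg :=
  MvPolynomial.C (uVar ^ (r + 1) * uVar ^ (n - 1)) *
      ∑ lam : Nat.Partition n, MvPolynomial.C (zSignPart 1 lam)⁻¹ * pPart lam
    + MvPolynomial.C ((uVar ^ (r + 1))⁻¹ * (uVar ^ (n - 1))⁻¹) *
      ∑ lam : Nat.Partition n, MvPolynomial.C (zSignPart (-1) lam)⁻¹ * pPart lam

/-- `T_{−μ} := T_{−μ₁} ⋯ T_{−μ_ℓ}`. -/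
def TnegPart (r : ℕ) {N : ℕ} (mu : Nat.Partition N) : SymFuncAlg :=
  (mu.parts.map (Tneg r)).prod

/-- `e_n := Σ_{λ⊢n} (−1)^{n−ℓ(λ)} p_λ / z_λ`, the `n`-th elementary symmetric function in
terms of power sums. -/
def elemSym (n : ℕ) : SymFuncAlg :=
  ∑ lam : Nat.Partition n,
    MvPolynomial.C ((-1 : QtField) ^ (n - Multiset.card lam.parts)
        * ((zPart lam : QtField))⁻¹) * pPart lam

/-- The partition `(1^N)` of `N`. -/
def onePow (N : ℕ) : Nat.Partition N :=
  Nat.Partition.ofSums N (Multiset.replicate N 1) (by simp)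

/-!
`T_{-n}` contains `p_n` with nonzero coefficient, so the `T_{-n}` are free generators of `Λ`. This
gives the basis, and an algebra homomorphism `φ : Λ → 𝕂` with `φ(T_{-1}) = 1` and `φ(T_{-n}) = 0`
for `n ≥ 2`. Applying `φ` to `e_r^s = ∑ c_μ T_{-μ}` yields `c_{(1^N)} = φ(e_r)^s`.

Write `φ(p_i) = i (1 + tⁱ) x_i` and `F(z) = exp (∑ x_i zⁱ)`. Summing `u^{r+n} φ(T_{-n}) zⁿ` over `n`
gives the `t`-difference equation `F(z) + tʳ F(t²z) = (1 + tʳ + u^{r+1} z) F(tz)`, while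
`φ(e_r)` is `(-1)ʳ` times the coefficient of `zʳ` in `D = 1 / (F(z) F(tz))`. A second solution
would be `z⁻ʳ G(z)`, but the recursion for the coefficients of `G` breaks down at `zʳ`. Take for `G`
the truncation below `zʳ`, and put `V = tʳ F(tz) G(z) - F(z) G(tz)`. Then `V` is constant up
to an explicit `zʳ` term, while `V D = tʳ H(z) - H(tz)` with `H = G / F` has no `zʳ` term; comparing
coefficients determines the coefficient of `zʳ` in `D`.
-/


section PartitionExp

open PowerSeries Finset
open scoped PowerSeries.WithPiTopology

variable {R : Type*} [CommRing R] [Algebra ℚ R]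

/-- The power series `exp (∑_{i ≥ 1} x_i zⁱ)`, written out as a generating function over
partitions. The value `x 0` plays no role. -/
def partitionExp (x : ℕ → R) : R⟦X⟧ :=
  Nat.Partition.genFun fun i c ↦ algebraMap ℚ R (1 / c.factorial) * x i ^ c

lemma coeff_partitionExp (x : ℕ → R) (n : ℕ) :
    coeff n (partitionExp x) = ∑ p : n.Partition, ∏ i ∈ p.parts.toFinset,
      algebraMap ℚ R (1 / (p.parts.count i).factorial) * x i ^ p.parts.count i := by
  simp only [partitionExp, Nat.Partition.coeff_genFun, Finsupp.prod, Multiset.toFinsupp_support,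
    Multiset.toFinsupp_apply]

lemma constantCoeff_partitionExp (x : ℕ → R) : constantCoeff (partitionExp x) = 1 := by
  simp [← coeff_zero_eq_constantCoeff_apply, coeff_partitionExp]

lemma one_add_tsum_eq_expand_rescale_exp [TopologicalSpace R] [T2Space R] (a : R) (i : ℕ) :
    1 + ∑' j, (algebraMap ℚ R (1 / (j + 1).factorial) * a ^ (j + 1)) •
      (X : R⟦X⟧) ^ ((i + 1) * (j + 1)) = expand (i + 1) i.succ_ne_zero (rescale a (exp R)) := by
  have hsum := Nat.Partition.summable_genFun_term
    (fun _ c ↦ algebraMap ℚ R (1 / c.factorial) * a ^ c) i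
  ext n
  rw [map_add, hsum.map_tsum _ (WithPiTopology.continuous_coeff _ _), coeff_expand]
  simp only [coeff_smul, coeff_X_pow, coeff_one, smul_eq_mul]
  split_ifs with hn hdvd hdvd
  · subst hn
    simp
  · exact absurd (hn ▸ dvd_zero _) hdvd
  · obtain ⟨_ | m, rfl⟩ := hdvd
    · simp at hn
    rw [tsum_eq_single m]
    · simp [coeff_exp, mul_comm]
    · intro j hj
      simp [hj.symm]
  · have hne (j : ℕ) : n ≠ (i + 1) * (j + 1) := fun h ↦ hdvd ⟨_, h⟩
    simp [hne]

lemma hasProd_partitionExp [TopologicalSpace R] [T2Space R] (x : ℕ → R) :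
    HasProd (fun i ↦ expand (i + 1) i.succ_ne_zero (rescale (x (i + 1)) (exp R)))
      (partitionExp x) := by
  simp only [← one_add_tsum_eq_expand_rescale_exp]
  exact Nat.Partition.hasProd_genFun fun i c ↦ algebraMap ℚ R (1 / c.factorial) * x i ^ c

lemma partitionExp_add (x y : ℕ → R) :
    partitionExp (x + y) = partitionExp x * partitionExp y := by
  let _ : TopologicalSpace R := ⊥
  have : DiscreteTopology R := ⟨rfl⟩
  refine (hasProd_partitionExp (x + y)).unique ?_
  convert (hasProd_partitionExp x).mul (hasProd_partitionExp y) using 2 with i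
  rw [← map_mul, exp_mul_exp_eq_exp_add, Pi.add_apply]

lemma partitionExp_zero : partitionExp (0 : ℕ → R) = 1 := by
  have hunit : IsUnit (partitionExp (0 : ℕ → R)) := by
    rw [isUnit_iff_constantCoeff, constantCoeff_partitionExp]
    exact isUnit_one
  rw [← hunit.mul_eq_left, ← partitionExp_add, add_zero]

lemma partitionExp_pow_mul (c : R) (x : ℕ → R) :
    partitionExp (fun i ↦ c ^ i * x i) = rescale c (partitionExp x) := by
  ext n
  rw [coeff_rescale, coeff_partitionExp, coeff_partitionExp, mul_sum]
  refine sum_congr rfl fun p _ ↦ ?_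
  have hpow : c ^ n = ∏ i ∈ p.parts.toFinset, (c ^ i) ^ p.parts.count i := by
    conv_lhs => rw [← p.parts_sum, sum_multiset_count, ← prod_pow_eq_pow_sum]
    simp only [smul_eq_mul, ← pow_mul, mul_comm]
  rw [hpow, ← prod_mul_distrib]
  exact prod_congr rfl fun i _ ↦ by ring

lemma partitionExp_pow_sub_one_mul (c : R) (x : ℕ → R) :
    partitionExp (fun i ↦ (c ^ i - 1) * x i) * partitionExp x = rescale c (partitionExp x) := by
  rw [← partitionExp_add, ← partitionExp_pow_mul]
  congr 1 with i
  simp only [Pi.add_apply]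
  ring

lemma partitionExp_neg_pow_sub_one_mul (c : R) (x : ℕ → R) :
    partitionExp (fun i ↦ -((c ^ i - 1) * x i)) * rescale c (partitionExp x) =
      partitionExp x := by
  rw [← partitionExp_pow_mul, ← partitionExp_add]
  congr 1 with i
  simp only [Pi.add_apply]
  ring

lemma partitionExp_neg_one_add_pow_mul (c : R) (x : ℕ → R) :
    partitionExp (fun i ↦ -((1 + c ^ i) * x i)) * (partitionExp x * rescale c (partitionExp x)) =
      1 := by
  rw [← partitionExp_pow_mul, ← partitionExp_add, ← partitionExp_add, ← partitionExp_zero]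
  congr 1 with i
  simp only [Pi.add_apply, Pi.zero_apply]
  ring

end PartitionExp

section QDifference

open PowerSeries Finset

variable {R : Type*} [CommRing R] {K : Type*} [Field K]

/-- The `q`-Pochhammer symbol `(t; t)_n`. -/
def qPochhammer (t : R) (n : ℕ) : R := ∏ i ∈ Icc 1 n, (1 - t ^ i)

lemma qPochhammer_succ (t : R) (n : ℕ) :
    qPochhammer t (n + 1) = qPochhammer t n * (1 - t ^ (n + 1)) :=
  prod_Icc_succ_top (by lia) _

lemma one_sub_pow_ne_zero {t : K} (ht : ¬IsOfFinOrder t) {n : ℕ} (hn : n ≠ 0) :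
    1 - t ^ n ≠ 0 := fun h ↦
  ht (isOfFinOrder_iff_pow_eq_one.mpr ⟨n, Nat.pos_of_ne_zero hn, (sub_eq_zero.mp h).symm⟩)

lemma qPochhammer_ne_zero {t : K} (ht : ¬IsOfFinOrder t) (n : ℕ) : qPochhammer t n ≠ 0 :=
  prod_ne_zero_iff.mpr fun _ hi ↦ one_sub_pow_ne_zero ht (by grind)

/-- The truncation at order `zᵏ` of the power series solution of
`t ^ (k + 1) G(z) + G(t² z) = (1 + t ^ (k + 1) + a z) G(t z)`; the recursion for its
coefficients breaks down at `z ^ (k + 1)`. -/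
def truncatedSolution (t a : K) (k : ℕ) : K⟦X⟧ :=
  PowerSeries.mk fun n ↦ if n ≤ k then
    (-a / t) ^ n * qPochhammer t (k - n) / (qPochhammer t n * qPochhammer t k) else 0

lemma coeff_truncatedSolution_of_lt (t a : K) {k n : ℕ} (h : k < n) :
    coeff n (truncatedSolution t a k) = 0 := by
  rw [truncatedSolution, coeff_mk, if_neg h.not_ge]

lemma constantCoeff_truncatedSolution {t : K} (ht : ¬IsOfFinOrder t) (a : K) (k : ℕ) :
    constantCoeff (truncatedSolution t a k) = 1 := by
  simp [← coeff_zero_eq_constantCoeff_apply, truncatedSolution, qPochhammer_ne_zero ht k,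
    qPochhammer.eq_def t 0]

lemma pow_mul_coeff_self_truncatedSolution {t : K} (ht₀ : t ≠ 0) (a : K) (k : ℕ) :
    t ^ k * coeff k (truncatedSolution t a k) = (-a) ^ k / qPochhammer t k ^ 2 := by
  have hP₀ : qPochhammer t 0 = 1 := prod_empty
  rw [truncatedSolution, coeff_mk, if_pos le_rfl, Nat.sub_self, hP₀, div_pow]
  field_simp

lemma coeff_succ_truncatedSolution {t : K} (ht₀ : t ≠ 0) (ht : ¬IsOfFinOrder t) (a : K)
    {k n : ℕ} (hn : n < k) :
    (t ^ (n + 1) - 1) * (t ^ (n + 1) - t ^ (k + 1)) * coeff (n + 1) (truncatedSolution t a k) =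
      a * t ^ n * coeff n (truncatedSolution t a k) := by
  obtain ⟨d, rfl⟩ := Nat.exists_eq_add_of_lt hn
  simp only [truncatedSolution, coeff_mk, if_pos hn.le, if_pos (Nat.succ_le_of_lt hn),
    show n + d + 1 - n = d + 1 by lia, show n + d + 1 - (n + 1) = d by lia]
  rw [qPochhammer_succ t n, qPochhammer_succ t d]
  have hPn := qPochhammer_ne_zero ht n
  have hPk := qPochhammer_ne_zero ht (n + d + 1)
  have hn' := one_sub_pow_ne_zero ht n.succ_ne_zero
  rw [Nat.succ_eq_add_one] at hn'
  rw [pow_succ (-a / t)]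
  field_simp
  ring

lemma truncatedSolution_qDifference {t : K} (ht₀ : t ≠ 0) (ht : ¬IsOfFinOrder t) (a : K)
    (k : ℕ) :
    C (t ^ (k + 1)) * truncatedSolution t a k + rescale t (rescale t (truncatedSolution t a k)) =
      (C (1 + t ^ (k + 1)) + C a * X) * rescale t (truncatedSolution t a k) -
        C (a * (-a) ^ k / qPochhammer t k ^ 2) * X ^ (k + 1) := by
  ext n
  rcases n with _ | n <;>
    simp only [add_mul, map_add, map_sub, mul_assoc, coeff_C_mul, coeff_rescale, coeff_zero_X_mul,
      coeff_succ_X_mul, coeff_X_pow]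
  · rw [if_neg (by lia)]
    ring
  rcases lt_trichotomy n k with hlt | rfl | hgt
  · rw [if_neg (by lia)]
    linear_combination coeff_succ_truncatedSolution ht₀ ht a hlt
  · rw [coeff_truncatedSolution_of_lt t a n.lt_succ_self, if_pos rfl, mul_div_assoc,
      ← pow_mul_coeff_self_truncatedSolution ht₀]
    ring
  · rw [coeff_truncatedSolution_of_lt t a hgt, coeff_truncatedSolution_of_lt t a (by lia),
      if_neg (by lia)]
    ring

/-- The series `b F(t z) G(z) - F(z) G(t z)`. For `b = t ^ m` this is, up to a monomial factor, the
Casoratian (`q`-Wronskian) of `F(z)` and `z ^ (-m) G(z)`. -/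
def casoratian (t b : R) (F G : R⟦X⟧) : R⟦X⟧ := C b * rescale t F * G - F * rescale t G

lemma rescale_casoratian {t b : R} {F G L S : R⟦X⟧}
    (hF : F + C b * rescale t (rescale t F) = L * rescale t F)
    (hG : C b * G + rescale t (rescale t G) = L * rescale t G - S) :
    rescale t (casoratian t b F G) = casoratian t b F G + S * rescale t F := by
  have hC : rescale t (C b) = C b := by
    ext (_ | n) <;> simp [coeff_rescale, coeff_C]
  simp only [casoratian, map_sub, map_mul, hC]
  linear_combination rescale t G * hF - rescale t F * hG

lemma coeff_casoratian_mul_eq_zero {t : R} {F D : R⟦X⟧} (hD : D * (F * rescale t F) = 1)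
    (G : R⟦X⟧) (n : ℕ) : coeff n (casoratian t (t ^ n) F G * D) = 0 := by
  -- `D F(t z)` is the inverse of `F`, so the product is `tⁿ H(z) - H(t z)` with `H = G / F`.
  have hinv : rescale t (D * rescale t F) = D * F := by
    have h := congrArg (rescale t) hD
    simp only [map_mul, map_one] at h ⊢
    linear_combination D * F * h - rescale t D * rescale t (rescale t F) * hD
  have hsplit : casoratian t (t ^ n) F G * D =
      C (t ^ n) * (G * (D * rescale t F)) - rescale t (G * (D * rescale t F)) := by
    rw [map_mul, hinv, casoratian]
    ring
  rw [hsplit, map_sub, coeff_C_mul, coeff_rescale, sub_self]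

lemma coeff_eq_zero_of_rescale_eq_add {t c : K} (ht : ¬IsOfFinOrder t) {V A : K⟦X⟧} {m n : ℕ}
    (hV : rescale t V = V + C c * X ^ m * A) (hn₀ : n ≠ 0) (hn : n < m) : coeff n V = 0 := by
  have h := congrArg (coeff n) hV
  rw [map_add, coeff_rescale, mul_assoc, coeff_C_mul, coeff_X_pow_mul', if_neg hn.not_ge] at h
  have hprod : (1 - t ^ n) * coeff n V = 0 := by linear_combination -h
  exact (mul_eq_zero.mp hprod).resolve_left (one_sub_pow_ne_zero ht hn₀)

lemma coeff_of_rescale_eq_add {t c : R} {V A : R⟦X⟧} {m : ℕ}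
    (hV : rescale t V = V + C c * X ^ m * A) :
    (t ^ m - 1) * coeff m V = c * constantCoeff A := by
  have h := congrArg (coeff m) hV
  rw [map_add, coeff_rescale, mul_assoc, coeff_C_mul, coeff_X_pow_mul', if_pos le_rfl,
    Nat.sub_self, coeff_zero_eq_constantCoeff_apply] at h
  linear_combination h

lemma coeff_succ_mul_of_coeff_eq_zero {V D : R⟦X⟧} {k : ℕ}
    (hV : ∀ n, n ≠ 0 → n < k + 1 → coeff n V = 0) :
    coeff (k + 1) (V * D) =
      constantCoeff V * coeff (k + 1) D + coeff (k + 1) V * constantCoeff D := by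
  rw [coeff_mul, Nat.sum_antidiagonal_eq_sum_range_succ_mk, sum_range_succ, sum_range_succ',
    sum_eq_zero]
  · simp
  · intro i hi
    rw [hV (i + 1) i.succ_ne_zero (by simpa using hi), zero_mul]

lemma constantCoeff_rescale (t : R) (F : R⟦X⟧) : constantCoeff (rescale t F) = constantCoeff F := by
  rw [← coeff_zero_eq_constantCoeff_apply, coeff_rescale, pow_zero, one_mul,
    coeff_zero_eq_constantCoeff_apply]

theorem coeff_succ_eq_of_qDifference {t : K} (ht₀ : t ≠ 0) (ht : ¬IsOfFinOrder t) (a : K)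
    (k : ℕ) {F D : K⟦X⟧} (hF₀ : constantCoeff F = 1) (hD : D * (F * rescale t F) = 1)
    (hF : F + C (t ^ (k + 1)) * rescale t (rescale t F) =
      (C (1 + t ^ (k + 1)) + C a * X) * rescale t F) :
    coeff (k + 1) D = (-a) ^ (k + 1) / qPochhammer t (k + 1) ^ 2 := by
  set V := casoratian t (t ^ (k + 1)) F (truncatedSolution t a k) with hVdef
  have hV : rescale t V = V + C (a * (-a) ^ k / qPochhammer t k ^ 2) * X ^ (k + 1) * rescale t F :=
    rescale_casoratian hF (truncatedSolution_qDifference ht₀ ht a k)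
  have hD₀ : constantCoeff D = 1 := by
    simpa [constantCoeff_rescale, hF₀] using congrArg constantCoeff hD
  have hV₀ : constantCoeff V = t ^ (k + 1) - 1 := by
    simp [hVdef, casoratian, constantCoeff_rescale, hF₀, constantCoeff_truncatedSolution ht]
  have hVtop := coeff_of_rescale_eq_add hV
  rw [constantCoeff_rescale, hF₀, mul_one] at hVtop
  have hVD := coeff_casoratian_mul_eq_zero hD (truncatedSolution t a k) (k + 1)
  rw [← hVdef, coeff_succ_mul_of_coeff_eq_zero fun n ↦ coeff_eq_zero_of_rescale_eq_add ht hV,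
    hV₀, hD₀, mul_one] at hVD
  have hk : 1 - t ^ (k + 1) ≠ 0 := one_sub_pow_ne_zero ht k.succ_ne_zero
  have hPk := qPochhammer_ne_zero ht k
  calc coeff (k + 1) D = -(a * (-a) ^ k / qPochhammer t k ^ 2) / (1 - t ^ (k + 1)) ^ 2 := by
        rw [eq_div_iff (pow_ne_zero 2 hk)]
        linear_combination (t ^ (k + 1) - 1) * hVD - hVtop
    _ = (-a) ^ (k + 1) / qPochhammer t (k + 1) ^ 2 := by
        rw [qPochhammer_succ]
        field_simp
        ring

end QDifference

section GradedTriangular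

open MvPolynomial

lemma exists_forall_eq_of_congr_lt {α : Type*} [Nonempty α] (g : ℕ → (ℕ → α) → α)
    (hg : ∀ n y z, (∀ i < n, y i = z i) → g n y = g n z) : ∃ y : ℕ → α, ∀ n, y n = g n y := by
  let step (n : ℕ) (ih : ∀ m < n, α) : α :=
    g n fun i ↦ if h : i < n then ih i h else Classical.arbitrary α
  refine ⟨Nat.lt_wfRel.wf.fix step, fun n ↦ ?_⟩
  rw [WellFounded.fix_eq]
  exact hg n _ _ fun i hi ↦ dif_pos hi

variable {R : Type*} [CommRing R]

/-- A family `T 1, T 2, …` of polynomials in the variables `X 0, X 1, …`, graded by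
`deg (X i) = i + 1`, such that `T n` is homogeneous of degree `n` and involves `X (n - 1)` with
invertible coefficient. The value `T 0` is ignored. -/
structure IsGradedTriangular (T : ℕ → MvPolynomial ℕ R) : Prop where
  isWeightedHomogeneous : ∀ n ≠ 0, IsWeightedHomogeneous (fun i ↦ i + 1) (T n) n
  isUnit_coeff : ∀ n ≠ 0, IsUnit (coeff (Finsupp.single (n - 1) 1) (T n))

lemma sub_C_coeff_mul_X_mem_supported {p : MvPolynomial ℕ R} {n : ℕ}
    (hp : IsWeightedHomogeneous (fun i ↦ i + 1) p (n + 1)) :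
    p - C (coeff (Finsupp.single n 1) p) * X n ∈ supported R (Set.Iio n) := by
  rw [mem_supported]
  intro i hi
  obtain ⟨d, hd, hid⟩ := (mem_vars_iff_mem_support i).mp hi
  rw [mem_support_iff, coeff_sub, coeff_C_mul, coeff_X] at hd
  have hd_ne : Finsupp.single n 1 ≠ d := by
    rintro rfl
    simp at hd
  rw [if_neg hd_ne, mul_zero, sub_zero] at hd
  obtain ⟨e, rfl⟩ : ∃ e, d = Finsupp.single i 1 + e := by
    refine exists_add_of_le ?_
    rw [Finsupp.single_le_iff]
    exact Nat.one_le_iff_ne_zero.mpr (Finsupp.mem_support_iff.mp hid)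
  have hweight : i + 1 + Finsupp.weight (fun i ↦ i + 1) e = n + 1 := by
    simpa [Finsupp.weight_single] using hp hd
  have hne : i ≠ n := by
    rintro rfl
    have : Finsupp.NonTorsionWeight ℕ (fun i : ℕ ↦ i + 1) :=
      Finsupp.nonTorsionWeight_of ℕ _ Nat.succ_ne_zero
    have he : e = 0 := (Finsupp.weight_eq_zero_iff_eq_zero (fun i ↦ i + 1)).mp (by lia)
    simp [he] at hd_ne
  exact Set.mem_Iio.mpr (by lia)

lemma aeval_congr_of_mem_supported {σ A : Type*} [CommRing A] [Algebra R A] {s : Set σ}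
    {p : MvPolynomial σ R} (hp : p ∈ supported R s) {y z : σ → A} (hyz : ∀ i ∈ s, y i = z i) :
    aeval y p = aeval z p :=
  eval₂Hom_congr' rfl (fun i hi _ ↦ hyz i (mem_supported.mp hp hi)) rfl

lemma isWeightedHomogeneous_multiset_prod {σ ι M : Type*} [AddCommMonoid M] {w : σ → M}
    {T : ι → MvPolynomial σ R} {deg : ι → M} {m : Multiset ι}
    (hT : ∀ i ∈ m, IsWeightedHomogeneous w (T i) (deg i)) :
    IsWeightedHomogeneous w (m.map T).prod (m.map deg).sum := by
  induction m using Multiset.induction with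
  | empty => simpa using isWeightedHomogeneous_one R w
  | cons i m ih =>
    rw [Multiset.map_cons, Multiset.prod_cons, Multiset.map_cons, Multiset.sum_cons]
    exact (hT i (Multiset.mem_cons_self i m)).mul
      (ih fun j hj ↦ hT j (Multiset.mem_cons_of_mem hj))

lemma isWeightedHomogeneous_prod_map_parts {σ : Type*} {w : σ → ℕ} {T : ℕ → MvPolynomial σ R}
    (hT : ∀ n ≠ 0, IsWeightedHomogeneous w (T n) n) {N : ℕ} (mu : N.Partition) :
    IsWeightedHomogeneous w (mu.parts.map T).prod N := by
  have h := isWeightedHomogeneous_multiset_prod fun n hn ↦ hT n (mu.parts_pos hn).ne'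
  rwa [Multiset.map_id', mu.parts_sum] at h

/-- The exponent of the monomial `∏ X (μᵢ - 1)`, which has degree `N` for `deg (X i) = i + 1`. -/
def partitionExponent {N : ℕ} (mu : N.Partition) : ℕ →₀ ℕ :=
  Multiset.toFinsupp (mu.parts.map (· - 1))

lemma prod_map_X_eq_monomial {σ : Type*} [DecidableEq σ] (m : Multiset σ) :
    (m.map X).prod = monomial (Multiset.toFinsupp m) (1 : R) := by
  induction m using Multiset.induction with
  | empty => simp
  | cons n m ih =>
    rw [Multiset.map_cons, Multiset.prod_cons, ih, ← Multiset.singleton_add, map_add,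
      Multiset.toFinsupp_singleton, X, monomial_mul, one_mul]

lemma prod_map_X_eq_monomial_partitionExponent {N : ℕ} (mu : N.Partition) :
    (mu.parts.map fun n ↦ X (n - 1)).prod = monomial (partitionExponent mu) (1 : R) := by
  rw [partitionExponent, ← prod_map_X_eq_monomial, Multiset.map_map, Function.comp_def]

lemma partitionExponent_injective {N : ℕ} :
    Function.Injective (partitionExponent : N.Partition → ℕ →₀ ℕ) := by
  have hparts (mu : N.Partition) : (mu.parts.map (· - 1)).map (· + 1) = mu.parts := by
    rw [Multiset.map_map]
    exact (Multiset.map_congr rfl fun i hi ↦ Nat.sub_add_cancel (mu.parts_pos hi)).trans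
      (Multiset.map_id' _)
  intro mu nu h
  ext1
  rw [← hparts mu, ← hparts nu, Multiset.toFinsupp.injective h]

lemma partitionExponent_indiscrete {n : ℕ} (hn : n ≠ 0) :
    partitionExponent (Nat.Partition.indiscrete n) = Finsupp.single (n - 1) 1 := by
  rw [partitionExponent, Nat.Partition.indiscrete_parts hn, Multiset.map_singleton,
    Multiset.toFinsupp_singleton]

lemma exists_partitionExponent_eq {N : ℕ} {d : ℕ →₀ ℕ}
    (hd : Finsupp.weight (fun i ↦ i + 1) d = N) :
    ∃ mu : N.Partition, partitionExponent mu = d := by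
  refine ⟨⟨(Finsupp.toMultiset d).map (· + 1), by simp +contextual, ?_⟩, ?_⟩
  · rw [← hd, Finset.sum_multiset_map_count, Finsupp.weight_apply, Finsupp.toFinset_toMultiset,
      Finsupp.sum]
    simp only [Finsupp.count_toMultiset]
  · simp [partitionExponent]

lemma linearIndependent_monomial_partitionExponent (N : ℕ) :
    LinearIndependent R fun mu : N.Partition ↦ monomial (partitionExponent mu) (1 : R) := by
  have h := (basisMonomials ℕ R).linearIndependent.comp _ (partitionExponent_injective (N := N))
  rwa [coe_basisMonomials] at h

lemma weightedHomogeneousSubmodule_le_span_monomial (N : ℕ) :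
    weightedHomogeneousSubmodule R (fun i : ℕ ↦ i + 1) N ≤ Submodule.span R
      (Set.range fun mu : N.Partition ↦ monomial (partitionExponent mu) (1 : R)) := by
  intro p hp
  rw [p.as_sum]
  refine Submodule.sum_mem _ fun d hd ↦ ?_
  obtain ⟨mu, rfl⟩ := exists_partitionExponent_eq (hp (mem_support_iff.mp hd))
  rw [← mul_one (coeff _ p), ← smul_eq_mul, ← smul_monomial]
  exact Submodule.smul_mem _ _ (Submodule.subset_span ⟨mu, rfl⟩)

namespace IsGradedTriangular

variable {T : ℕ → MvPolynomial ℕ R}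

lemma exists_aeval_eq (hT : IsGradedTriangular T) {A : Type*} [CommRing A] [Algebra R A]
    (v : ℕ → A) : ∃ y : ℕ → A, ∀ n ≠ 0, aeval y (T n) = v n := by
  let c (j : ℕ) : R := coeff (Finsupp.single j 1) (T (j + 1))
  let tail (j : ℕ) : MvPolynomial ℕ R := T (j + 1) - C (c j) * X j
  have htail (j : ℕ) : tail j ∈ supported R (Set.Iio j) :=
    sub_C_coeff_mul_X_mem_supported (hT.isWeightedHomogeneous _ j.succ_ne_zero)
  have hc (j : ℕ) : ∃ b, c j * b = 1 := (hT.isUnit_coeff _ j.succ_ne_zero).exists_right_inv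
  choose b hb using hc
  obtain ⟨y, hy⟩ := exists_forall_eq_of_congr_lt
    (fun j y ↦ b j • (v (j + 1) - aeval y (tail j)))
    fun j y z hyz ↦ by rw [aeval_congr_of_mem_supported (htail j) hyz]
  refine ⟨y, fun n hn ↦ ?_⟩
  obtain ⟨j, rfl⟩ := Nat.exists_eq_succ_of_ne_zero hn
  have hsplit : T (j + 1) = C (c j) * X j + tail j := (add_sub_cancel _ _).symm
  rw [Nat.succ_eq_add_one, hsplit, map_add, map_mul, aeval_C, aeval_X, hy j, ← Algebra.smul_def,
    smul_smul, hb j, one_smul, sub_add_cancel]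

lemma linearIndependent (hT : IsGradedTriangular T) (N : ℕ) :
    LinearIndependent R fun mu : N.Partition ↦ (mu.parts.map T).prod := by
  obtain ⟨y, hy⟩ := hT.exists_aeval_eq fun n ↦ (X (n - 1) : MvPolynomial ℕ R)
  refine LinearIndependent.of_comp (aeval y).toLinearMap ?_
  have hcomp (mu : N.Partition) :
      aeval y (mu.parts.map T).prod = monomial (partitionExponent mu) (1 : R) := by
    rw [map_multiset_prod, Multiset.map_map, ← prod_map_X_eq_monomial_partitionExponent]
    exact congrArg _ (Multiset.map_congr rfl fun n hn ↦ hy n (mu.parts_pos hn).ne')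
  simpa only [Function.comp_def, AlgHom.toLinearMap_apply, hcomp] using
    linearIndependent_monomial_partitionExponent N

lemma span_eq {K : Type*} [Field K] {T : ℕ → MvPolynomial ℕ K} (hT : IsGradedTriangular T)
    (N : ℕ) : Submodule.span K (Set.range fun mu : N.Partition ↦ (mu.parts.map T).prod) =
      weightedHomogeneousSubmodule K (fun i ↦ i + 1) N := by
  have hle : Submodule.span K (Set.range fun mu : N.Partition ↦ (mu.parts.map T).prod) ≤
      weightedHomogeneousSubmodule K (fun i ↦ i + 1) N := by
    rw [Submodule.span_le]
    rintro _ ⟨mu, rfl⟩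
    exact isWeightedHomogeneous_prod_map_parts hT.isWeightedHomogeneous mu
  have hmono := weightedHomogeneousSubmodule_le_span_monomial (R := K) N
  have := FiniteDimensional.span_of_finite K
    (Set.finite_range fun mu : N.Partition ↦ monomial (partitionExponent mu) (1 : K))
  refine hle.antisymm (hmono.trans (Submodule.eq_of_le_of_finrank_le (hle.trans hmono) ?_).ge)
  rw [finrank_span_eq_card (hT.linearIndependent N)]
  exact finrank_range_le_card _

end IsGradedTriangular

end GradedTriangular

section Bosonization

open Finset
open MvPolynomial (IsWeightedHomogeneous)
open PowerSeries (rescale)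

lemma uVar_ne_zero : uVar ≠ 0 := RatFunc.X_ne_zero

lemma tVar_ne_zero : tVar ≠ 0 := pow_ne_zero 2 uVar_ne_zero

lemma tVar_pow (n : ℕ) : tVar ^ n = uVar ^ n * uVar ^ n := by
  rw [tVar, ← mul_pow, ← sq]

lemma prod_tVar_pow (r : ℕ) : ∏ i ∈ Icc 1 r, tVar ^ i = (uVar ^ (r + 1)) ^ r := by
  induction r with
  | zero => simp
  | succ r ih =>
    rw [prod_Icc_succ_top (by lia), ih, tVar]
    ring

lemma not_isOfFinOrder_uVar : ¬IsOfFinOrder uVar := by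
  rw [isOfFinOrder_iff_pow_eq_one]
  rintro ⟨n, hn, h⟩
  rw [uVar, ← RatFunc.algebraMap_X, ← map_pow,
    ← map_one (algebraMap (Polynomial ℚ) (RatFunc ℚ))] at h
  have hdeg := congrArg Polynomial.natDegree (RatFunc.algebraMap_injective ℚ h)
  rw [Polynomial.natDegree_X_pow, Polynomial.natDegree_one] at hdeg
  exact hn.ne' hdeg

lemma not_isOfFinOrder_tVar : ¬IsOfFinOrder tVar := fun h ↦
  not_isOfFinOrder_uVar ((isOfFinOrder_pow.mp h).resolve_right two_ne_zero)

lemma one_add_tVar_pow_ne_zero {n : ℕ} (hn : n ≠ 0) : 1 + tVar ^ n ≠ 0 := by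
  intro h
  refine one_sub_pow_ne_zero not_isOfFinOrder_tVar (mul_ne_zero hn two_ne_zero) ?_
  rw [pow_mul]
  linear_combination (1 - tVar ^ n) * h

lemma pPart_eq_monomial {n : ℕ} (lam : n.Partition) :
    pPart lam = MvPolynomial.monomial (partitionExponent lam) 1 :=
  prod_map_X_eq_monomial_partitionExponent lam

lemma isWeightedHomogeneous_pPart {n : ℕ} (lam : n.Partition) :
    IsWeightedHomogeneous (fun i ↦ i + 1) (pPart lam) n := by
  refine isWeightedHomogeneous_prod_map_parts (fun i hi ↦ ?_) lam
  have hX := MvPolynomial.isWeightedHomogeneous_X QtField (fun i : ℕ ↦ i + 1) (i - 1)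
  rwa [Nat.sub_add_cancel (Nat.pos_of_ne_zero hi)] at hX

lemma map_pPart (φ : SymFuncAlg →ₐ[QtField] QtField) {n : ℕ} (lam : n.Partition) :
    φ (pPart lam) = ∏ i ∈ lam.parts.toFinset, φ (pVar i) ^ lam.parts.count i := by
  rw [pPart, map_multiset_prod, Multiset.map_map, prod_multiset_map_count]
  rfl

lemma inv_zSignPart (e : QtField) {n : ℕ} (lam : n.Partition) :
    (zSignPart e lam)⁻¹ = ∏ i ∈ lam.parts.toFinset, ((lam.parts.count i).factorial : QtField)⁻¹ *
      (e⁻¹ * ((tVar ^ i - 1) / (i * (1 + tVar ^ i)))) ^ lam.parts.count i := by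
  rw [zSignPart, ← prod_inv_distrib]
  refine prod_congr rfl fun i _ ↦ ?_
  have hti : tVar ^ i ≠ 0 := pow_ne_zero i tVar_ne_zero
  have hquot : (1 - (tVar ^ i)⁻¹) / (1 + (tVar ^ i)⁻¹) = (tVar ^ i - 1) / (1 + tVar ^ i) := by
    rw [← mul_div_mul_left _ _ hti, mul_sub, mul_add, mul_inv_cancel₀ hti, mul_one, add_comm]
  rw [mul_inv, ← inv_pow, inv_div, zpow_neg, zpow_natCast]
  congr 2
  calc (1 - (tVar ^ i)⁻¹) / (e * i * (1 + (tVar ^ i)⁻¹))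
      = e⁻¹ * ((i : QtField)⁻¹ * ((1 - (tVar ^ i)⁻¹) / (1 + (tVar ^ i)⁻¹))) := by
        rw [mul_comm (e * i), ← div_div, div_eq_inv_mul _ (e * i), mul_inv, mul_assoc]
    _ = e⁻¹ * ((tVar ^ i - 1) / (i * (1 + tVar ^ i))) := by
        rw [hquot, ← div_div, div_right_comm, div_eq_inv_mul _ (i : QtField)]

/-- The sum `∑_{λ ⊢ n} p_λ / z^{±}_λ(t)`, a mode of one of the two vertex operators whose
combination is `T_{-n}`; the sign is the parameter `e`. -/
def vertexMode (e : QtField) (n : ℕ) : SymFuncAlg :=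
  ∑ lam : n.Partition, MvPolynomial.C (zSignPart e lam)⁻¹ * pPart lam

lemma Tneg_eq_vertexMode_add (r : ℕ) {n : ℕ} (hn : n ≠ 0) :
    Tneg r n = MvPolynomial.C (uVar ^ (r + n)) * vertexMode 1 n +
      MvPolynomial.C (uVar ^ (r + n))⁻¹ * vertexMode (-1) n := by
  rw [Tneg, ← mul_inv, ← pow_add, show r + 1 + (n - 1) = r + n by lia]
  rfl

lemma isWeightedHomogeneous_vertexMode (e : QtField) (n : ℕ) :
    IsWeightedHomogeneous (fun i ↦ i + 1) (vertexMode e n) n :=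
  .sum _ _ _ fun lam _ ↦ (isWeightedHomogeneous_pPart lam).C_mul _

lemma coeff_vertexMode (e : QtField) {n : ℕ} (hn : n ≠ 0) :
    MvPolynomial.coeff (Finsupp.single (n - 1) 1) (vertexMode e n) =
      e⁻¹ * ((tVar ^ n - 1) / (n * (1 + tVar ^ n))) := by
  classical
  simp only [vertexMode, MvPolynomial.coeff_sum, MvPolynomial.coeff_C_mul, pPart_eq_monomial,
    ← partitionExponent_indiscrete hn, MvPolynomial.coeff_monomial,
    partitionExponent_injective.eq_iff, mul_ite, mul_one, mul_zero, sum_ite_eq', mem_univ, if_true]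
  simp [inv_zSignPart, Nat.Partition.indiscrete_parts hn]

lemma isGradedTriangular_Tneg (r : ℕ) : IsGradedTriangular (Tneg r) where
  isWeightedHomogeneous n hn := by
    rw [Tneg_eq_vertexMode_add r hn]
    exact ((isWeightedHomogeneous_vertexMode _ n).C_mul _).add
      ((isWeightedHomogeneous_vertexMode _ n).C_mul _)
  isUnit_coeff n hn := by
    have hu : uVar ^ (r + n) ≠ 0 := pow_ne_zero _ uVar_ne_zero
    have hcoeff : MvPolynomial.coeff (Finsupp.single (n - 1) 1) (Tneg r n) =
        (1 - tVar ^ (r + n)) * (1 - tVar ^ n) / (uVar ^ (r + n) * n * (1 + tVar ^ n)) := by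
      rw [Tneg_eq_vertexMode_add r hn, MvPolynomial.coeff_add, MvPolynomial.coeff_C_mul,
        MvPolynomial.coeff_C_mul, coeff_vertexMode _ hn, coeff_vertexMode _ hn, tVar_pow (r + n)]
      field_simp
      ring
    rw [hcoeff, isUnit_iff_ne_zero]
    refine div_ne_zero (mul_ne_zero ?_ ?_) (mul_ne_zero (mul_ne_zero hu ?_) ?_)
    · exact one_sub_pow_ne_zero not_isOfFinOrder_tVar (by lia)
    · exact one_sub_pow_ne_zero not_isOfFinOrder_tVar hn
    · exact Nat.cast_ne_zero.mpr hn
    · exact one_add_tVar_pow_ne_zero hn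

lemma exists_algHom_Tneg (r : ℕ) : ∃ φ : SymFuncAlg →ₐ[QtField] QtField,
    ∀ n ≠ 0, φ (Tneg r n) = if n = 1 then 1 else 0 :=
  let ⟨y, hy⟩ := (isGradedTriangular_Tneg r).exists_aeval_eq fun n ↦ if n = 1 then 1 else 0
  ⟨MvPolynomial.aeval y, hy⟩

/-- The scalar `x_i` with `φ(p_i) = i (1 + tⁱ) x_i` for `i ≥ 1`. In these coordinates the images
under `φ` of `vertexMode` and `elemSym` are coefficients of `partitionExp` of polynomial multiples
in `tⁱ` of `x_i`. -/
def normalizedPowerSum (φ : SymFuncAlg →ₐ[QtField] QtField) (i : ℕ) : QtField :=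
  φ (pVar i) / (i * (1 + tVar ^ i))

lemma map_vertexMode (φ : SymFuncAlg →ₐ[QtField] QtField) (e : QtField) (n : ℕ) :
    φ (vertexMode e n) = PowerSeries.coeff n
      (partitionExp fun i ↦ e⁻¹ * ((tVar ^ i - 1) * normalizedPowerSum φ i)) := by
  rw [coeff_partitionExp, vertexMode, map_sum]
  refine sum_congr rfl fun lam _ ↦ ?_
  rw [← MvPolynomial.algebraMap_eq, ← Algebra.smul_def, map_smul, smul_eq_mul, map_pPart,
    inv_zSignPart, ← prod_mul_distrib]
  refine prod_congr rfl fun i _ ↦ ?_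
  rw [mul_assoc, ← mul_pow, map_div₀, map_one, map_natCast, one_div, normalizedPowerSum]
  ring

lemma neg_one_pow_sub_card_parts {R : Type*} [CommRing R] {n : ℕ} (lam : n.Partition) :
    (-1 : R) ^ (n - lam.parts.card) =
      (-1) ^ n * ∏ i ∈ lam.parts.toFinset, (-1) ^ lam.parts.count i := by
  have hcard : lam.parts.card ≤ n := by
    simpa [lam.parts_sum] using
      Multiset.card_nsmul_le_sum (a := 1) fun i (hi : i ∈ lam.parts) ↦ lam.parts_pos hi
  rw [prod_pow_eq_pow_sum, Multiset.toFinset_sum_count_eq, ← pow_add]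
  exact neg_one_pow_congr (by rw [Nat.even_sub hcard, Nat.even_add])

lemma map_elemSym (φ : SymFuncAlg →ₐ[QtField] QtField) (n : ℕ) :
    φ (elemSym n) = (-1) ^ n * PowerSeries.coeff n
      (partitionExp fun i ↦ -((1 + tVar ^ i) * normalizedPowerSum φ i)) := by
  rw [coeff_partitionExp, elemSym, map_sum, mul_sum]
  refine sum_congr rfl fun lam _ ↦ ?_
  rw [← MvPolynomial.algebraMap_eq, ← Algebra.smul_def, map_smul, smul_eq_mul, map_pPart,
    neg_one_pow_sub_card_parts, zPart, prod_multiset_count]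
  push_cast
  rw [← prod_mul_distrib, mul_assoc, mul_assoc, ← prod_inv_distrib, ← prod_mul_distrib,
    ← prod_mul_distrib]
  congr 1
  refine prod_congr rfl fun i hi ↦ ?_
  have hi : i ≠ 0 := (lam.parts_pos (Multiset.mem_toFinset.mp hi)).ne'
  have hp : -((1 + tVar ^ i) * normalizedPowerSum φ i) = -1 * ((i : QtField)⁻¹ * φ (pVar i)) := by
    have := one_add_tVar_pow_ne_zero hi
    rw [normalizedPowerSum]
    field_simp
  rw [hp, mul_pow, mul_pow]
  ring

lemma eq_onePow_iff {N : ℕ} {mu : N.Partition} : mu = onePow N ↔ ∀ n ∈ mu.parts, n = 1 := by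
  have hparts : (onePow N).parts = Multiset.replicate N 1 := by
    rw [onePow, Nat.Partition.ofSums_parts, Multiset.filter_eq_self]
    intro n hn
    rw [Multiset.eq_of_mem_replicate hn]
    exact one_ne_zero
  refine ⟨fun h n hn ↦ Multiset.eq_of_mem_replicate (hparts ▸ h ▸ hn), fun h ↦ ?_⟩
  have hrep := Multiset.eq_replicate_card.mpr h
  have hcard : N = mu.parts.card := by
    conv_lhs => rw [← mu.parts_sum, hrep, Multiset.sum_replicate, smul_eq_mul, mul_one]
  ext1
  rw [hparts, hrep, ← hcard]

variable {r : ℕ} {φ : SymFuncAlg →ₐ[QtField] QtField}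

lemma rescale_add_eq_of_map_Tneg (hφ : ∀ n ≠ 0, φ (Tneg r n) = if n = 1 then 1 else 0) :
    PowerSeries.C (tVar ^ r) * rescale tVar
        (partitionExp fun i ↦ (tVar ^ i - 1) * normalizedPowerSum φ i) +
      partitionExp (fun i ↦ -((tVar ^ i - 1) * normalizedPowerSum φ i)) =
    PowerSeries.C (1 + tVar ^ r) + PowerSeries.C (uVar ^ (r + 1)) * PowerSeries.X := by
  ext n
  simp only [map_add, PowerSeries.coeff_C_mul, PowerSeries.coeff_rescale]
  obtain rfl | hn := eq_or_ne n 0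
  · simp [constantCoeff_partitionExp, add_comm]
  have hT := hφ n hn
  rw [Tneg_eq_vertexMode_add r hn, map_add, ← MvPolynomial.algebraMap_eq, ← Algebra.smul_def,
    ← Algebra.smul_def, map_smul, map_smul, map_vertexMode, map_vertexMode] at hT
  simp only [inv_one, one_mul, inv_neg, neg_one_mul, smul_eq_mul] at hT
  have hu : uVar ^ (r + n) ≠ 0 := pow_ne_zero _ uVar_ne_zero
  have hpow : uVar ^ (r + 1) * (if n = 1 then 1 else 0) =
      uVar ^ (r + n) * if n = 1 then 1 else 0 := by
    split_ifs with h <;> simp [h]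
  simp only [PowerSeries.coeff_C, if_neg hn, PowerSeries.coeff_X, zero_add]
  rw [hpow, ← hT, ← mul_assoc, ← pow_add, tVar_pow]
  field_simp

lemma qDifference_of_map_Tneg (hφ : ∀ n ≠ 0, φ (Tneg r n) = if n = 1 then 1 else 0) :
    partitionExp (normalizedPowerSum φ) + PowerSeries.C (tVar ^ r) *
        rescale tVar (rescale tVar (partitionExp (normalizedPowerSum φ))) =
      (PowerSeries.C (1 + tVar ^ r) + PowerSeries.C (uVar ^ (r + 1)) * PowerSeries.X) *
        rescale tVar (partitionExp (normalizedPowerSum φ)) := by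
  rw [← rescale_add_eq_of_map_Tneg hφ, add_mul, partitionExp_neg_pow_sub_one_mul, mul_assoc,
    ← map_mul, partitionExp_pow_sub_one_mul, add_comm]

lemma map_elemSym_of_map_Tneg (hr : r ≠ 0)
    (hφ : ∀ n ≠ 0, φ (Tneg r n) = if n = 1 then 1 else 0) :
    φ (elemSym r) = ∏ i ∈ Icc 1 r, tVar ^ i / (1 - tVar ^ i) ^ 2 := by
  obtain ⟨k, rfl⟩ := Nat.exists_eq_succ_of_ne_zero hr
  rw [map_elemSym, coeff_succ_eq_of_qDifference tVar_ne_zero not_isOfFinOrder_tVar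
    (uVar ^ (k + 1 + 1)) k (constantCoeff_partitionExp _) (partitionExp_neg_one_add_pow_mul _ _)
    (qDifference_of_map_Tneg hφ), prod_div_distrib, prod_tVar_pow, prod_pow, ← qPochhammer,
    ← mul_div_assoc, ← mul_pow, neg_one_mul, neg_neg]

lemma map_TnegPart (hφ : ∀ n ≠ 0, φ (Tneg r n) = if n = 1 then 1 else 0) {N : ℕ}
    (mu : N.Partition) : φ (TnegPart r mu) = if mu = onePow N then 1 else 0 := by
  rw [TnegPart, map_multiset_prod, Multiset.map_map]
  simp only [eq_onePow_iff]
  split_ifs with hmu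
  · refine Multiset.prod_eq_one fun x hx ↦ ?_
    obtain ⟨n, hn, rfl⟩ := Multiset.mem_map.mp hx
    rw [Function.comp_apply, hφ n (mu.parts_pos hn).ne', if_pos (hmu n hn)]
  · push Not at hmu
    obtain ⟨n, hn, hn_ne⟩ := hmu
    refine Multiset.prod_eq_zero (Multiset.mem_map.mpr ⟨n, hn, ?_⟩)
    rw [Function.comp_apply, hφ n (mu.parts_pos hn).ne', if_neg hn_ne]

lemma coeff_onePow_eq_map (hφ : ∀ n ≠ 0, φ (Tneg r n) = if n = 1 then 1 else 0) {N : ℕ}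
    {c : N.Partition → QtField} {f : SymFuncAlg} (hf : f = ∑ mu, c mu • TnegPart r mu) :
    c (onePow N) = φ f := by
  simp [hf, map_TnegPart hφ]

end Bosonization

/-- **q = 1 bosonization of the deformed Virasoro algebra.**  Fix positive integers
`r, s` and set `N := rs`.  Then (1) the family `{T_{−μ} : μ ⊢ N}` is a `𝕂`-basis of the
homogeneous component of `Λ` of degree `N` (for the grading `deg pₙ = n`), and
(2) writing `e_r^s = Σ_{μ⊢N} c_μ T_{−μ}`, the coefficient of `T_{−(1^N)}` is
`c_{(1^N)} = Π_{i=1}^{r} (t^i/(1 − t^i)²)^s`. -/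
theorem stmt_13 (r s : ℕ) (hr : 0 < r) (hs : 0 < s) :
    LinearIndependent QtField (fun mu : Nat.Partition (r * s) => TnegPart r mu) ∧
    Submodule.span QtField (Set.range (fun mu : Nat.Partition (r * s) => TnegPart r mu))
      = MvPolynomial.weightedHomogeneousSubmodule QtField (fun i : ℕ => i + 1) (r * s) ∧
    ∀ c : Nat.Partition (r * s) → QtField,
      (elemSym r) ^ s = ∑ mu : Nat.Partition (r * s), c mu • TnegPart r mu →
      c (onePow (r * s))
        = ∏ i ∈ Finset.Icc 1 r, (tVar ^ i / (1 - tVar ^ i) ^ 2) ^ s := by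
  obtain ⟨φ, hφ⟩ := exists_algHom_Tneg r
  refine ⟨(isGradedTriangular_Tneg r).linearIndependent _, (isGradedTriangular_Tneg r).span_eq _,
    fun c hc ↦ ?_⟩
  rw [coeff_onePow_eq_map hφ hc, map_pow, map_elemSym_of_map_Tneg hr.ne' hφ, Finset.prod_pow]

end
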